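/- Let e ∈ {0,1,2}, let r ≡ e+1 (mod 2), let U be an F-vector space of dimension r+2, H a hyperplane of U, Q a nondegenerate quadratic form on H of Witt defect e, Π a generator of Q, and let P be a hyperbolic, parabolic or elliptic avsp for (U, H, Q, Π) (according as e = 0, 1 or 2). Then every nonzero vector x ∈ H with Q(x) = 0 and x ∉ Π lies in exactly q members of P; equivalently, exactly q of the generators S ∩ H (for S ∈ P) contain x. -/

import Mathlib

open Module Submodule

section Defs

variable {F : Type*} [Field F] {V : Type*} [AddCommGroup V] [Module F V]

/-- A subspace is totally singular if the quadratic form vanishes on it. -/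
def IsTotallySingular (Q : QuadraticForm F V) (W : Submodule F V) : Prop :=
  ∀ x ∈ W, Q x = 0

/-- The Witt index: maximal dimension of a totally singular subspace. -/
noncomputable def wittIndex (Q : QuadraticForm F V) : ℕ :=
  sSup {n : ℕ | ∃ W : Submodule F V, IsTotallySingular Q W ∧ Module.finrank F ↥W = n}

/-- Nondegeneracy: the only singular vector orthogonal to everything is `0`. -/
def QuadNondeg (Q : QuadraticForm F V) : Prop :=
  ∀ v : V, Q v = 0 → (∀ x : V, QuadraticMap.polar Q v x = 0) → v = 0

/-- A generator: totally singular subspace of dimension the Witt index. -/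
def IsGenerator (Q : QuadraticForm F V) (G : Submodule F V) : Prop :=
  IsTotallySingular Q G ∧ Module.finrank F ↥G = wittIndex Q

/-- A spread of `Q`. -/
def IsSpread (Q : QuadraticForm F V) (S : Set (Submodule F V)) : Prop :=
  (∀ G ∈ S, IsGenerator Q G) ∧
  (∀ G ∈ S, ∀ G' ∈ S, G ≠ G' → G ⊓ G' = ⊥) ∧
  (∀ v : V, Q v = 0 → ∃ G ∈ S, v ∈ G)

/-- The perp of a vector with respect to the polar form of `Q`. -/
def vecPerp (Q : QuadraticForm F V) (u : V) : Submodule F V :=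
  LinearMap.ker (QuadraticMap.polarBilin Q u)

/-- The perp of a subspace with respect to the polar form of `Q`. -/
def subPerp (Q : QuadraticForm F V) (G : Submodule F V) : Submodule F V :=
  ⨅ g ∈ G, vecPerp Q g

/-- Hyperbolic (e = 0), parabolic (e = 1) or elliptic (e = 2) affine vector space
partition for `(U, H, Q, Pgen)`. -/
def IsAvsp [Fintype F] (e r : ℕ) {U : Type*} [AddCommGroup U] [Module F U]
    (H : Submodule F U) (Q : QuadraticForm F ↥H) (Pgen : Submodule F ↥H)
    (P : Set (Submodule F U)) : Prop :=
  P.ncard = Fintype.card F ^ ((r + e + 1) / 2) ∧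
  (∀ S ∈ P, Module.finrank F ↥S = (r + 3 - e) / 2 ∧ ¬ S ≤ H) ∧
  (∀ L : Submodule F U, Module.finrank F ↥L = 1 → ¬ L ≤ H → ∃! S, S ∈ P ∧ L ≤ S) ∧
  (∀ S ∈ P, IsGenerator Q (S.comap H.subtype) ∧ S.comap H.subtype ⊓ Pgen = ⊥) ∧
  (∀ S ∈ P, ∀ T ∈ P, S ≠ T → S.comap H.subtype ≠ T.comap H.subtype) ∧
  (∀ S ∈ P, ∀ T ∈ P, S ≠ T → Module.finrank F ↥(S ⊓ T) ≤ 1) ∧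
  (∀ S ∈ P, ∀ T ∈ P, S ≠ T →
    Module.finrank F ↥(S.comap H.subtype ⊓ T.comap H.subtype) = 1 →
      QuadNondeg (Q.comp ((S ⊔ T).comap H.subtype).subtype) ∧
      Module.finrank F ↥((S ⊔ T).comap H.subtype) =
        2 * wittIndex (Q.comp ((S ⊔ T).comap H.subtype).subtype))

end Defs

section Helpers

variable {F : Type*} [Field F] {V : Type*} [AddCommGroup V] [Module F V]

theorem finrank_le_wittIndex [FiniteDimensional F V] {Q : QuadraticForm F V} {W : Submodule F V}
    (hW : IsTotallySingular Q W) : finrank F W ≤ wittIndex Q :=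
  le_csSup ⟨finrank F V, by rintro _ ⟨W', -, rfl⟩; exact W'.finrank_le⟩ ⟨W, hW, rfl⟩

theorem mem_subPerp {Q : QuadraticForm F V} {G : Submodule F V} {v : V} :
    v ∈ subPerp Q G ↔ ∀ g ∈ G, QuadraticMap.polar Q g v = 0 := by
  simp [subPerp, vecPerp]

theorem IsTotallySingular.polar_eq_zero {Q : QuadraticForm F V} {G : Submodule F V}
    (hG : IsTotallySingular Q G) {x y : V} (hx : x ∈ G) (hy : y ∈ G) :
    QuadraticMap.polar Q x y = 0 := by
  simp [QuadraticMap.polar, hG _ (G.add_mem hx hy), hG _ hx, hG _ hy]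

/-- A singular vector orthogonal to a generator lies in it. -/
theorem IsGenerator.mem_of_mem_subPerp [FiniteDimensional F V] {Q : QuadraticForm F V}
    {G : Submodule F V} (hG : IsGenerator Q G) {v : V} (hv : Q v = 0) (hvG : v ∈ subPerp Q G) :
    v ∈ G := by
  have hsing : IsTotallySingular Q (G ⊔ span F {v}) := by
    intro y hy
    obtain ⟨g, hg, z, hz, rfl⟩ := mem_sup.1 hy
    obtain ⟨a, rfl⟩ := mem_span_singleton.1 hz
    simp [QuadraticMap.map_add, QuadraticMap.map_smul, QuadraticMap.polar_smul_right,
      hG.1 g hg, hv, mem_subPerp.1 hvG g hg]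
  have heq : G = G ⊔ span F {v} :=
    eq_of_le_of_finrank_le le_sup_left ((finrank_le_wittIndex hsing).trans hG.2.ge)
  rw [heq]
  exact mem_sup_right (mem_span_singleton_self v)

theorem finrank_le_finrank_add_finrank_subPerp [FiniteDimensional F V] (Q : QuadraticForm F V)
    (G : Submodule F V) : finrank F V ≤ finrank F G + finrank F (subPerp Q G) := by
  let φ : V →ₗ[F] Dual F G := (QuadraticMap.polarBilin Q).compl₂ G.subtype
  have hker : LinearMap.ker φ = subPerp Q G := by
    ext v
    rw [mem_subPerp, LinearMap.mem_ker, LinearMap.ext_iff]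
    simp [φ, QuadraticMap.polar_comm Q v]
  have h := LinearMap.finrank_range_add_finrank_ker φ
  have hr := (LinearMap.range φ).finrank_le
  rw [Subspace.dual_finrank_eq] at hr
  rw [hker] at h
  omega

/-- All fibres of a nonzero functional on a space over a finite field have the same size. -/
theorem card_mul_card_fiber_eq [Fintype F] [Fintype V] [DecidableEq F] (f : V →ₗ[F] F)
    (hf : f ≠ 0) (a : F) :
    Fintype.card F * (Finset.univ.filter fun v => f v = a).card = Fintype.card V := by
  have hsurj := LinearMap.surjective hf
  have h := Finset.card_eq_sum_card_fiberwise (s := (Finset.univ : Finset V))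
    (t := (Finset.univ : Finset F)) (f := f) (by intro _ _; simp)
  rw [Finset.card_univ] at h
  have hfib : ∀ b ∈ (Finset.univ : Finset F), (Finset.univ.filter fun v => f v = b).card =
      (Finset.univ.filter fun v => f v = a).card := fun b _ =>
    AddMonoidHom.card_fiber_eq_of_mem_range f.toAddMonoidHom (hsurj b) (hsurj a)
  rw [h, Finset.sum_congr rfl hfib, Finset.sum_const, Finset.card_univ, smul_eq_mul]

/-- An upper bound for the number of singular vectors outside a generator. -/
theorem IsGenerator.card_mul_card_singular_le [Fintype F] [Fintype V] [DecidableEq F]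
    {Q : QuadraticForm F V} {G : Submodule F V} [DecidablePred (· ∈ G)]
    (hG : IsGenerator Q G) :
    Fintype.card F * (Finset.univ.filter fun v => Q v = 0 ∧ v ∉ G).card +
      Nat.card (subPerp Q G) ≤ Fintype.card V := by
  classical
  set A : Finset V := Finset.univ.filter fun v => v ∉ subPerp Q G with hA
  have hperp : A.card + Nat.card (subPerp Q G) = Fintype.card V := by
    rw [Nat.card_eq_fintype_card, Fintype.card_subtype, add_comm,
      Finset.card_filter_add_card_filter_not, Finset.card_univ]
  have hsub : (Finset.univ.filter fun v => Q v = 0 ∧ v ∉ G) ⊆ A.filter fun v => Q v = 0 := by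
    intro v
    simp only [hA, Finset.mem_filter, Finset.mem_univ, true_and]
    exact fun h => ⟨fun h' => h.2 (hG.mem_of_mem_subPerp h.1 h'), h.1⟩
  have hGperp : ∀ g ∈ G, g ∈ subPerp Q G := fun g hg =>
    mem_subPerp.2 fun g' hg' => hG.1.polar_eq_zero hg' hg
  have htrans : ∀ g : G, (A.filter fun v => Q (v + g) = 0).card =
      (A.filter fun v => Q v = 0).card := by
    intro g
    refine Finset.card_bij (fun v _ => v + g) ?_ (fun _ _ _ _ h => add_right_cancel h) ?_
    · intro v
      simp only [hA, Finset.mem_filter, Finset.mem_univ, true_and]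
      exact fun h => ⟨fun h' => h.1 ((add_mem_cancel_right (hGperp g g.2)).1 h'), h.2⟩
    · intro v
      simp only [hA, Finset.mem_filter, Finset.mem_univ, true_and]
      exact fun h => ⟨v - g, ⟨fun h' => h.1 (by simpa using add_mem h' (hGperp g g.2)),
        by simpa using h.2⟩, by simp⟩
  have hfib : ∀ v ∈ A, Fintype.card F * (Finset.univ.filter fun g : G => Q (v + g) = 0).card =
      Fintype.card G := by
    intro v hv
    have hne : (QuadraticMap.polarBilin Q v).comp G.subtype ≠ 0 := by
      intro h0
      refine (Finset.mem_filter.1 hv).2 (mem_subPerp.2 fun g hg => ?_)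
      have := LinearMap.congr_fun h0 ⟨g, hg⟩
      rw [QuadraticMap.polar_comm]
      simpa using this
    rw [← card_mul_card_fiber_eq _ hne (-Q v)]
    congr 2
    ext g
    simp [QuadraticMap.map_add, hG.1 g g.2, eq_neg_iff_add_eq_zero, add_comm]
  have hdouble : ∑ v ∈ A, (Finset.univ.filter fun g : G => Q (v + g) = 0).card =
      ∑ g : G, (A.filter fun v => Q (v + g) = 0).card :=
    Finset.sum_card_bipartiteAbove_eq_sum_card_bipartiteBelow (fun (v : V) (g : G) => Q (v + g) = 0)
  have hpos : 0 < Fintype.card G := Fintype.card_pos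
  have hcount : Fintype.card F * (A.filter fun v => Q v = 0).card = A.card := by
    refine Nat.eq_of_mul_eq_mul_right hpos ?_
    calc _ = Fintype.card F * ∑ g : G, (A.filter fun v => Q (v + g) = 0).card := by
          simp only [htrans, Finset.sum_const, Finset.card_univ, smul_eq_mul]; ring
      _ = ∑ v ∈ A, Fintype.card F * (Finset.univ.filter fun g : G => Q (v + g) = 0).card := by
          rw [← hdouble, Finset.mul_sum]
      _ = _ := by rw [Finset.sum_congr rfl hfib]; simp
  rw [← hperp, ← hcount]
  gcongr

/-- A singular point lies in at most `q` members of an avsp. -/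
theorem IsAvsp.ncard_mem_le [Fintype F] [FiniteDimensional F V] {e r : ℕ} {H : Submodule F V}
    (hV : finrank F V = finrank F H + 1) {Q : QuadraticForm F H} {G : Submodule F H}
    {P : Set (Submodule F V)} (hP : IsAvsp e r H Q G P) {x : H} (hx0 : x ≠ 0) (hxQ : Q x = 0) :
    {S : Submodule F V | S ∈ P ∧ (x : V) ∈ S}.ncard ≤ Fintype.card F := by
  obtain ⟨-, hS, -, hgen, -, hmeet, hhyp⟩ := hP
  obtain ⟨φ, hφ⟩ := LinearMap.exists_extend (QuadraticMap.polarBilin Q x)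
  have hφH : ∀ y : H, φ y = QuadraticMap.polar Q x y := fun y => LinearMap.congr_fun hφ y
  have hHtop : H < ⊤ := lt_top_iff_ne_top.2 fun h => by
    rw [h, finrank_top] at hV; omega
  obtain ⟨h, hh0, hhH⟩ := H.exists_le_ker_of_lt_top hHtop
  have hker : LinearMap.ker h = H := by
    refine (eq_of_le_of_finrank_le hhH ?_).symm
    have := Dual.finrank_ker_add_one_of_ne_zero hh0
    omega
  have hslope : ∀ S ∈ {S : Submodule F V | S ∈ P ∧ (x : V) ∈ S}, ∃ c : F, ∀ s ∈ S,
      φ s = c * h s := by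
    rintro S ⟨hSP, hxS⟩
    obtain ⟨s, hs, hsH⟩ := SetLike.not_le_iff_exists.1 (hS S hSP).2
    have hhs : h s ≠ 0 := by rwa [← hker, LinearMap.mem_ker] at hsH
    refine ⟨φ s / h s, fun t ht => ?_⟩
    have hmem : t - (h t / h s) • s ∈ S := S.sub_mem ht (S.smul_mem _ hs)
    have hmemH : t - (h t / h s) • s ∈ H := by
      rw [← hker, LinearMap.mem_ker]
      simp [hhs]
    have hz := hφH ⟨_, hmemH⟩
    rw [(hgen S hSP).1.1.polar_eq_zero (x := x) (y := ⟨_, hmemH⟩) hxS hmem] at hz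
    simp only [map_sub, map_smul, smul_eq_mul] at hz
    rw [sub_eq_zero.1 hz]
    ring
  choose! c hc using hslope
  have hinj : Set.InjOn c {S : Submodule F V | S ∈ P ∧ (x : V) ∈ S} := by
    intro S hSx T hTx hcST
    by_contra hne
    obtain ⟨hSP, hxS⟩ := id hSx
    obtain ⟨hTP, hxT⟩ := id hTx
    have hone : finrank F ↥(S.comap H.subtype ⊓ T.comap H.subtype) = 1 := by
      apply le_antisymm
      · rw [← comap_inf]
        refine le_trans ?_ (hmeet S hSP T hTP hne)
        rw [LinearEquiv.finrank_eq
          (equivMapOfInjective H.subtype H.injective_subtype _), map_comap_subtype]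
        exact finrank_mono inf_le_right
      · refine one_le_finrank_iff.2 fun h0 => hx0 ?_
        rw [← mem_bot F, ← h0]
        exact ⟨hxS, hxT⟩
    have hxST : x ∈ (S ⊔ T).comap H.subtype := (le_sup_left : S ≤ S ⊔ T) hxS
    have hzero := (hhyp S hSP T hTP hne hone).1 ⟨x, hxST⟩ hxQ fun y => by
      obtain ⟨s, hs, t, ht, hst⟩ := mem_sup.1 y.2
      have hy : φ (y : H) = 0 := by
        have hhy : h (y : H) = 0 := hhH (y : H).2
        change s + t = ((y : H) : V) at hst
        rw [← hst] at hhy ⊢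
        rw [map_add, hc S hSx s hs, hc T hTx t ht, ← hcST, ← mul_add, ← map_add, hhy, mul_zero]
      rw [hφH] at hy
      simpa [QuadraticMap.polar] using hy
    exact hx0 (congrArg Subtype.val hzero)
  calc _ ≤ (Set.univ : Set F).ncard :=
        Set.ncard_le_ncard_of_injOn c (fun _ _ => Set.mem_univ _) hinj
    _ = _ := by rw [Set.ncard_univ, Nat.card_eq_fintype_card]

end Helpers

theorem avsp_point_in_exactly_q_members {F : Type*} [Field F] [Fintype F] (e r : ℕ)
    (he : e = 0 ∨ e = 1 ∨ e = 2) (hmod : r % 2 = (e + 1) % 2)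
    (U : Type*) [AddCommGroup U] [Module F U] [FiniteDimensional F U]
    (hU : Module.finrank F U = r + 2)
    (H : Submodule F U) (hH : Module.finrank F ↥H = r + 1)
    (Q : QuadraticForm F ↥H) (hQnd : QuadNondeg Q)
    (hdef : Module.finrank F ↥H = 2 * wittIndex Q + e)
    (Pgen : Submodule F ↥H) (hPgen : IsGenerator Q Pgen)
    (P : Set (Submodule F U)) (hP : IsAvsp e r H Q Pgen P)
    (x : ↥H) (hx0 : x ≠ 0) (hxQ : Q x = 0) (hxPgen : x ∉ Pgen) :
    {S : Submodule F U | S ∈ P ∧ (x : U) ∈ S}.ncard = Fintype.card F := by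
  classical
  have : Finite U := Module.finite_of_finite F
  have : Fintype U := Fintype.ofFinite U
  have : Finite (Submodule F U) := Finite.of_injective _ SetLike.coe_injective
  have : Fintype (Submodule F U) := Fintype.ofFinite _
  have hle : ∀ y : H, y ≠ 0 → Q y = 0 →
      {S : Submodule F U | S ∈ P ∧ (y : U) ∈ S}.ncard ≤ Fintype.card F :=
    fun y hy hyQ => hP.ncard_mem_le (by omega) hy hyQ
  obtain ⟨hcard, -, -, hgen, -⟩ := hP
  set q := Fintype.card F
  set w := wittIndex Q
  set Z : Finset H := Finset.univ.filter fun v => Q v = 0 ∧ v ∉ Pgen with hZ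
  set T : Finset (Submodule F U) := Finset.univ.filter fun S => S ∈ P
  have hN : ∀ y : H, {S : Submodule F U | S ∈ P ∧ (y : U) ∈ S}.ncard =
      (T.filter fun S => (y : U) ∈ S).card := by
    intro y
    rw [← Set.ncard_coe_finset]
    congr 1
    ext S
    simp [T]
  have hT : T.card = q ^ (w + e) := by
    rw [show w + e = (r + e + 1) / 2 by omega, ← hcard, ← Set.ncard_coe_finset]
    congr 1
    ext S
    simp [T]
  have hfib : ∀ S ∈ T, (Z.filter fun y : H => (y : U) ∈ S).card = q ^ w - 1 := by
    intro S hS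
    obtain ⟨hSgen, hSP⟩ := hgen S (Finset.mem_filter.1 hS).2
    have heq : (Z.filter fun y : H => (y : U) ∈ S) =
        (Finset.univ.filter fun y => y ∈ S.comap H.subtype).erase 0 := by
      ext y
      simp only [hZ, Finset.mem_filter, Finset.mem_univ, true_and, Finset.mem_erase]
      constructor
      · rintro ⟨⟨-, hy⟩, hyS⟩
        exact ⟨fun h0 => hy (h0 ▸ Pgen.zero_mem), hyS⟩
      · rintro ⟨hy0, hyS⟩
        refine ⟨⟨hSgen.1 y hyS, fun hy => hy0 ?_⟩, hyS⟩
        rw [← mem_bot F, ← hSP]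
        exact ⟨hyS, hy⟩
    rw [heq, Finset.card_erase_of_mem (by simp), ← Fintype.card_subtype,
      Module.card_eq_pow_finrank (K := F) (V := S.comap H.subtype), hSgen.2]
  have hdouble : ∑ y ∈ Z, (T.filter fun S => (y : U) ∈ S).card =
      ∑ S ∈ T, (Z.filter fun y : H => (y : U) ∈ S).card :=
    Finset.sum_card_bipartiteAbove_eq_sum_card_bipartiteBelow
      (fun (y : H) (S : Submodule F U) => (y : U) ∈ S)
  rw [Finset.sum_congr rfl hfib, Finset.sum_const, hT, smul_eq_mul] at hdouble
  have hZcard : q * Z.card ≤ q ^ (w + e) * (q ^ w - 1) := by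
    have h1 := hPgen.card_mul_card_singular_le
    have h2 := finrank_le_finrank_add_finrank_subPerp Q Pgen
    rw [hPgen.2, hdef] at h2
    rw [Module.card_eq_pow_finrank (K := F) (V := H), hdef, Nat.card_eq_fintype_card,
      Module.card_eq_pow_finrank (K := F) (V := subPerp Q Pgen)] at h1
    have h3 : q ^ (w + e) ≤ q ^ finrank F (subPerp Q Pgen) :=
      Nat.pow_le_pow_right Fintype.card_pos (by omega)
    rw [Nat.mul_sub, mul_one, ← pow_add, show w + e + w = 2 * w + e by omega]
    exact Nat.le_sub_of_add_le ((Nat.add_le_add_left h3 _).trans h1)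
  have hbound : ∀ y ∈ Z, (T.filter fun S => (y : U) ∈ S).card ≤ q := by
    intro y hy
    obtain ⟨hyQ, hyP⟩ := (Finset.mem_filter.1 hy).2
    rw [← hN]
    exact hle y (fun h0 => hyP (h0 ▸ Pgen.zero_mem)) hyQ
  have hsum : ∑ y ∈ Z, (T.filter fun S => (y : U) ∈ S).card = ∑ y ∈ Z, q := by
    refine le_antisymm (Finset.sum_le_sum hbound) ?_
    rw [hdouble, Finset.sum_const, smul_eq_mul, mul_comm]
    exact hZcard
  rw [hN]
  exact (Finset.sum_eq_sum_iff_of_le hbound).1 hsum x (by simp [hZ, hxQ, hxPgen])
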